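/- arXiv:2401.09437 — 2 statements merged into one kernel-verified Lean document; each statement's English description precedes it below -/
import Mathlib

section
/- Let M be a metric space, x ∈ M, and (g_n)_{n≥0} a sequence of maps g_n : M → M with g_0 = id (playing the role of the fiber iterates f^n_w of a random map). Let (α_n)_{n≥1} be a sequence of functions α_n : [0,∞) → [0,∞) such that α_n(r) ≤ α_n(s) whenever 0 ≤ r ≤ s, and sup_{r∈(0,1)} Σ_{n≥1} α_n(r) < ∞. Fix 0 < ε < 1 and set A_ε(x) := {y ∈ M : d(g_n(x), g_n(y)) ≤ ε for all n ≥ 0}. Suppose there are infinitely many n ∈ ℕ for which there exists a set V_n ⊆ M with x ∈ V_n, A_ε(x) ⊆ V_n, and d(g_i(y), g_i(z)) ≤ α_{n−i}(d(g_n(y), g_n(z))) for all y, z ∈ V_n and all 0 ≤ i ≤ n−1. Then A_ε(x) = {x}. -/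
/-! A point `y` of `A` stays `ε`-close to the orbit of `x`, so at a zooming time `n ≥ 1` the
contraction estimate with `i = 0` and monotonicity give `dist x y ≤ α n ε`. As the series
`∑ α n ε` has nonnegative terms and bounded partial sums, `α n ε → 0`; since there are arbitrarily
large zooming times, `dist x y = 0`. -/

/-- Expansivity lemma for random zooming systems (along a fixed fiber):
if `x` has infinitely many zooming times whose pre-balls contain the set
`A_ε(x)` of points `ε`-shadowing the orbit of `x`, then `A_ε(x) = {x}`. -/
theorem expansivity_of_infinitely_many_zooming_times
    {M : Type*} [MetricSpace M] (x : M) (g : ℕ → M → M) (hg0 : g 0 = id)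
    (α : ℕ → ℝ → ℝ)
    (hα_nonneg : ∀ n : ℕ, 1 ≤ n → ∀ r : ℝ, 0 ≤ r → 0 ≤ α n r)
    (hα_mono : ∀ n : ℕ, 1 ≤ n → ∀ r s : ℝ, 0 ≤ r → r ≤ s → α n r ≤ α n s)
    (hα_sum : ∃ C : ℝ, ∀ r ∈ Set.Ioo (0 : ℝ) 1, ∀ N : ℕ,
      ∑ n ∈ Finset.range N, α (n + 1) r ≤ C)
    (ε : ℝ) (hε0 : 0 < ε) (hε1 : ε < 1)
    (A : Set M) (hA : A = {y : M | ∀ n : ℕ, dist (g n x) (g n y) ≤ ε})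
    (hinf : {n : ℕ | ∃ V : Set M, x ∈ V ∧ A ⊆ V ∧
      ∀ y ∈ V, ∀ z ∈ V, ∀ i < n,
        dist (g i y) (g i z) ≤ α (n - i) (dist (g n y) (g n z))}.Infinite) :
    A = {x} := by
  obtain ⟨C, hC⟩ := hα_sum
  have hsum : Summable fun n => α (n + 1) ε :=
    summable_of_sum_range_le (fun n => hα_nonneg _ (Nat.le_add_left 1 n) _ hε0.le)
      (hC ε ⟨hε0, hε1⟩)
  have hlim : Filter.Tendsto (fun n => α n ε) Filter.atTop (nhds 0) :=
    (Filter.tendsto_add_atTop_iff_nat 1).mp hsum.tendsto_atTop_zero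
  ext y
  rw [Set.mem_singleton_iff]
  constructor
  · intro hy
    have hyε : ∀ n, dist (g n x) (g n y) ≤ ε := by simpa [hA] using hy
    by_contra hne
    have hpos : 0 < dist x y := dist_pos.mpr (Ne.symm hne)
    obtain ⟨N, hN⟩ := Filter.eventually_atTop.mp (hlim.eventually (gt_mem_nhds hpos))
    obtain ⟨n, ⟨V, hxV, hAV, hV⟩, hn⟩ := hinf.exists_gt N
    have hn0 : 0 < n := by omega
    have h0 := hV x hxV y (hAV hy) 0 hn0
    simp only [hg0, id, Nat.sub_zero] at h0
    have h1 := hα_mono n hn0 _ ε dist_nonneg (hyε n)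
    exact absurd (hN n hn.le) (not_lt.mpr (h0.trans h1))
  · rintro rfl
    simp [hA, hε0.le]
end

section
/- Define α_n : [0,∞) → [0,∞) by α_n(r) = (1/(1 + n√r))² · r for n ≥ 1. Then (α_n) is a zooming contraction: (1) α_n(r) < r for all n ≥ 1 and all r > 0; (2) α_n(r) < α_n(s) whenever 0 < r < s; (3) α_m(α_n(r)) ≤ α_{m+n}(r) for all r > 0 and m, n ≥ 1; and (4) sup_{r∈(0,1)} Σ_{n≥1} α_n(r) ≤ π²/6 < ∞. -/
/-! On square roots the contraction is the Möbius semiflow `t ↦ t / (1 + n t)`, which is translation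
by `n` in the coordinate `1 / t`: indeed `α_n(r) = (√r / (1 + n √r))²`. Hence `α_n` decreases values,
is strictly monotone, and satisfies the composition law with equality; and since
`t / (1 + n t) ≤ 1 / n`, the series is dominated by `∑ 1 / n² = π² / 6`. -/

/-- The non-exponential zooming contraction `α_n(r) = (1 / (1 + n √r))² r`
from Pinheiro's example. -/
noncomputable def pinheiroContraction (n : ℕ) (r : ℝ) : ℝ :=
  (1 / (1 + n * Real.sqrt r)) ^ 2 * r

/-- The contraction is conjugate, through the square root, to `t ↦ t / (1 + n t)`. -/
theorem pinheiroContraction_eq_sq (n : ℕ) {r : ℝ} (hr : 0 ≤ r) :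
    pinheiroContraction n r = (√r / (1 + n * √r)) ^ 2 := by
  rw [pinheiroContraction, div_pow, div_pow, Real.sq_sqrt hr]
  ring

theorem sqrt_pinheiroContraction (n : ℕ) {r : ℝ} (hr : 0 ≤ r) :
    √(pinheiroContraction n r) = √r / (1 + n * √r) := by
  rw [pinheiroContraction_eq_sq n hr, Real.sqrt_sq (by positivity)]

/-- The semigroup law, which holds with equality because the conjugated maps translate `1 / t`. -/
theorem pinheiroContraction_comp (m n : ℕ) {r : ℝ} (hr : 0 ≤ r) :
    pinheiroContraction m (pinheiroContraction n r) = pinheiroContraction (m + n) r := by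
  have h0 : 0 ≤ pinheiroContraction n r := by
    rw [pinheiroContraction_eq_sq n hr]
    positivity
  rw [pinheiroContraction_eq_sq m h0, sqrt_pinheiroContraction n hr,
    pinheiroContraction_eq_sq (m + n) hr]
  have ht : 0 ≤ √r := Real.sqrt_nonneg r
  generalize √r = t at ht
  have h1 : 0 < 1 + (n : ℝ) * t := by positivity
  have h2 : 0 < 1 + ((m + n : ℕ) : ℝ) * t := by positivity
  have h3 : 1 + (m : ℝ) * (t / (1 + n * t)) = (1 + ((m + n : ℕ) : ℝ) * t) / (1 + n * t) := by
    field_simp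
    push_cast
    ring
  rw [h3, div_div_div_cancel_right₀ h1.ne']

theorem pinheiroContraction_lt_self {n : ℕ} (hn : 1 ≤ n) {r : ℝ} (hr : 0 < r) :
    pinheiroContraction n r < r := by
  have ht : 0 < √r := Real.sqrt_pos.2 hr
  have hn' : (0 : ℝ) < n := by exact_mod_cast hn
  rw [pinheiroContraction_eq_sq n hr.le]
  calc (√r / (1 + n * √r)) ^ 2 < √r ^ 2 := by
        gcongr
        exact div_lt_self ht (by nlinarith [mul_pos hn' ht])
    _ = r := Real.sq_sqrt hr.le

theorem pinheiroContraction_lt (n : ℕ) {r s : ℝ} (hr : 0 < r) (hrs : r < s) :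
    pinheiroContraction n r < pinheiroContraction n s := by
  have ht : √r < √s := Real.sqrt_lt_sqrt hr.le hrs
  have ht0 : 0 < √r := Real.sqrt_pos.2 hr
  have hs0 : 0 < √s := ht0.trans ht
  rw [pinheiroContraction_eq_sq n hr.le, pinheiroContraction_eq_sq n (hr.trans hrs).le]
  have key : √r / (1 + n * √r) < √s / (1 + n * √s) := by
    rw [div_lt_div_iff₀ (by positivity) (by positivity)]
    nlinarith
  gcongr

theorem pinheiroContraction_succ_le (n : ℕ) {r : ℝ} (hr : 0 ≤ r) :
    pinheiroContraction (n + 1) r ≤ 1 / ((n + 1 : ℕ) : ℝ) ^ 2 := by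
  have ht : 0 ≤ √r := Real.sqrt_nonneg r
  have key : √r / (1 + ((n + 1 : ℕ) : ℝ) * √r) ≤ 1 / ((n + 1 : ℕ) : ℝ) := by
    rw [div_le_div_iff₀ (by positivity) (by positivity)]
    nlinarith
  rw [pinheiroContraction_eq_sq _ hr]
  calc _ ≤ (1 / ((n + 1 : ℕ) : ℝ)) ^ 2 := by gcongr
    _ = _ := by rw [div_pow, one_pow]

/-- The functions `α_n(r) = (1 / (1 + n √r))² r` form a zooming contraction:
(1) `α_n(r) < r` for `r > 0`; (2) `α_n` is strictly increasing on `(0, ∞)`;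
(3) `α_m(α_n(r)) ≤ α_{m+n}(r)`; and (4) for every `r ∈ (0,1)` the series
`∑_{n ≥ 1} α_n(r)` is summable with sum at most `π²/6`. -/
theorem pinheiroContraction_is_zooming_contraction :
    (∀ n : ℕ, 1 ≤ n → ∀ r : ℝ, 0 < r → pinheiroContraction n r < r) ∧
    (∀ n : ℕ, 1 ≤ n → ∀ r s : ℝ, 0 < r → r < s →
      pinheiroContraction n r < pinheiroContraction n s) ∧
    (∀ m n : ℕ, 1 ≤ m → 1 ≤ n → ∀ r : ℝ, 0 < r →
      pinheiroContraction m (pinheiroContraction n r) ≤ pinheiroContraction (m + n) r) ∧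
    (∀ r ∈ Set.Ioo (0 : ℝ) 1,
      Summable (fun n : ℕ => pinheiroContraction (n + 1) r) ∧
      ∑' n : ℕ, pinheiroContraction (n + 1) r ≤ Real.pi ^ 2 / 6) := by
  refine ⟨fun n hn r hr => pinheiroContraction_lt_self hn hr,
    fun n _ r s hr hrs => pinheiroContraction_lt n hr hrs,
    fun m n _ _ r hr => (pinheiroContraction_comp m n hr.le).le, fun r hr => ?_⟩
  -- The term `1 / 0 ^ 2` of the zeta series is `0`, so shifting the index leaves the sum unchanged.
  have hz : HasSum (fun n : ℕ => 1 / ((n + 1 : ℕ) : ℝ) ^ 2) (Real.pi ^ 2 / 6) := by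
    simpa using (hasSum_nat_add_iff' 1).2 hasSum_zeta_two
  have hle := fun n : ℕ => pinheiroContraction_succ_le n hr.1.le
  have hs : Summable (fun n : ℕ => pinheiroContraction (n + 1) r) := by
    refine hz.summable.of_nonneg_of_le (fun n => ?_) hle
    rw [pinheiroContraction_eq_sq _ hr.1.le]
    positivity
  exact ⟨hs, hasSum_le hle hs.hasSum hz⟩
end
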